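/- Let E be an elliptic curve over a finite field 𝔽_p and let a_p = p + 1 − #E(𝔽_p). Then |a_p| ≤ 2√p (Hasse bound). -/

import Mathlib

open Polynomial
set_option linter.unusedSectionVars false

namespace HasseAux

/-- Discriminant inequality from the parallelogram law. -/
theorem disc {G : Type*} [AddCommGroup G] (h : G → ℤ) (h0 : ∀ x, 0 ≤ h x)
    (par : ∀ x y, h (x + y) + h (x - y) = 2 * h x + 2 * h y) (x y : G) (hx : h x = 1) :
    (h y + 1 - h (y - x)) ^ 2 ≤ 4 * h y := by
  have hz : h 0 = 0 := by have := par 0 0; simp at this; omega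
  set a := h y + 1 - h (y - x) with ha
  have key : ∀ n : ℕ, ∀ ε : ℤ, (ε = 1 ∨ ε = -1) →
      h (y + y + (ε * n) • x) = n ^ 2 + 2 * a * ε * n + 4 * h y ∧
      h (y + y + (ε * (n + 1)) • x) = (n + 1) ^ 2 + 2 * a * ε * (n + 1) + 4 * h y := by
    have hneg : ∀ z, h (-z) = h z := by
      intro z; have := par 0 z; simp [hz] at this; omega
    have h2 : h (y + y) = 4 * h y := by have := par y y; simp [hz] at this; omega
    have hp := par y x
    have h3 := par y (y + x)
    have h4 := par y (y - x)
    rw [show y - (y + x) = -x by abel, hneg] at h3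
    rw [show y - (y - x) = x by abel] at h4
    intro n ε hε
    induction n with
    | zero =>
      rcases hε with rfl | rfl
      · refine ⟨by simp [h2], ?_⟩
        simp [show y + y + x = y + (y + x) by abel]; linarith
      · refine ⟨by simp [h2], ?_⟩
        simp [show y + y + -x = y + (y - x) by abel]; linarith
    | succ n ih =>
      refine ⟨by simpa using ih.2, ?_⟩
      have := par (y + y + (ε * (n + 1)) • x) (ε • x)
      have hε' : h (ε • x) = 1 := by rcases hε with rfl | rfl <;> simp [hx, hneg]
      rw [show y + y + (ε * (n + 1)) • x - ε • x = y + y + (ε * n) • x by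
        rw [mul_add, add_smul]; simp; abel, ih.1, ih.2, hε',
        show y + y + (ε * (n + 1)) • x + ε • x = y + y + (ε * (((n + 1 : ℕ) : ℤ) + 1)) • x by
          push_cast; rw [mul_add ε (n + 1 : ℤ) 1, add_smul (ε * (n + 1 : ℤ))]; simp; abel] at this
      have e2 : ε ^ 2 = 1 := by rcases hε with rfl | rfl <;> norm_num
      push_cast at this ⊢
      linarith
  rcases le_total 0 a with hl | hl
  · obtain ⟨n, hn⟩ := Int.eq_ofNat_of_zero_le hl
    have := (key n (-1) (Or.inr rfl)).1
    have := h0 (y + y + (-1 * (n : ℤ)) • x)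
    nlinarith
  · obtain ⟨n, hn⟩ := Int.eq_ofNat_of_zero_le (neg_nonneg.mpr hl)
    have := (key n 1 (Or.inl rfl)).1
    have := h0 (y + y + (1 * (n : ℤ)) • x)
    nlinarith

section poly
variable {k : Type*} [Field k]

/-- Symmetric product of two pairs. -/
def T {R : Type*} [CommRing R] (a b c d : R) : Fin 3 → R := ![a * c, a * d + b * c, b * d]

/-- The maximum of the degrees of a triple. -/
noncomputable def M (v : Fin 3 → k[X]) : ℕ := Finset.univ.sup fun i => (v i).natDegree

theorem le_M (v : Fin 3 → k[X]) (i : Fin 3) : (v i).natDegree ≤ M v :=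
  Finset.le_sup (f := fun i => (v i).natDegree) (Finset.mem_univ i)

theorem M_le {v : Fin 3 → k[X]} {n : ℕ} (h : ∀ i, (v i).natDegree ≤ n) : M v ≤ n :=
  Finset.sup_le fun i _ => h i

theorem M_T {a b c d : k[X]} (h1 : IsCoprime a b) (h2 : IsCoprime c d) :
    M (T a b c d) = max a.natDegree b.natDegree + max c.natDegree d.natDegree := by
  set m := max a.natDegree b.natDegree with hm
  set n := max c.natDegree d.natDegree with hn
  have ham : a.natDegree ≤ m := le_max_left _ _
  have hbm : b.natDegree ≤ m := le_max_right _ _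
  have hcn : c.natDegree ≤ n := le_max_left _ _
  have hdn : d.natDegree ≤ n := le_max_right _ _
  apply le_antisymm
  · apply M_le
    intro i
    fin_cases i
    · exact natDegree_mul_le_of_le ham hcn
    · exact natDegree_add_le_of_degree_le (natDegree_mul_le_of_le ham hdn)
        (natDegree_mul_le_of_le hbm hcn)
    · exact natDegree_mul_le_of_le hbm hdn
  · by_contra hlt
    push Not at hlt
    have hc : ∀ i, (T a b c d i).coeff (m + n) = 0 := fun i =>
      coeff_eq_zero_of_natDegree_lt ((le_M _ i).trans_lt hlt)
    have e0 := hc 0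
    have e1 := hc 1
    have e2 := hc 2
    simp only [T, Matrix.cons_val_zero, Matrix.cons_val_one, Matrix.cons_val, coeff_add] at e0 e1 e2
    rw [coeff_mul_add_eq_of_natDegree_le ham hcn] at e0
    rw [coeff_mul_add_eq_of_natDegree_le ham hdn, coeff_mul_add_eq_of_natDegree_le hbm hcn] at e1
    rw [coeff_mul_add_eq_of_natDegree_le hbm hdn] at e2
    have aux : ∀ a b : k[X], IsCoprime a b → a.coeff (max a.natDegree b.natDegree) = 0 →
        b.coeff (max a.natDegree b.natDegree) = 0 → False := by
      intro a b hab h1 h2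
      rcases le_total a.natDegree b.natDegree with h | h
      · rw [max_eq_right h] at h1 h2
        have hb : b = 0 := leadingCoeff_eq_zero.mp h2
        subst hb
        rw [natDegree_zero, Nat.le_zero] at h
        rw [natDegree_zero] at h1
        have : a = 0 := by rw [eq_C_of_natDegree_eq_zero h, h1, C_0]
        subst this
        exact not_isCoprime_zero_zero hab
      · rw [max_eq_left h] at h1 h2
        have hb : a = 0 := leadingCoeff_eq_zero.mp h1
        subst hb
        rw [natDegree_zero, Nat.le_zero] at h
        rw [natDegree_zero] at h2
        have : b = 0 := by rw [eq_C_of_natDegree_eq_zero h, h2, C_0]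
        subst this
        exact not_isCoprime_zero_zero hab
    have A := aux a b h1
    have B := aux c d h2
    rw [← hm] at A
    rw [← hn] at B
    by_cases ha : a.coeff m = 0
    · have hb : b.coeff m ≠ 0 := fun h => A ha h
      have hd : d.coeff n = 0 := by simpa [hb] using e2
      have : c.coeff n = 0 := by simpa [ha, hb] using e1
      exact B this hd
    · have hc0 : c.coeff n = 0 := by simpa [ha] using e0
      have : d.coeff n = 0 := by simpa [ha, hc0] using e1
      exact B hc0 this

theorem span_T {R : Type*} [CommRing R] {a b c d : R} (h1 : IsCoprime a b) (h2 : IsCoprime c d) :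
    Ideal.span (Set.range (T a b c d)) = ⊤ := by
  by_contra hne
  obtain ⟨I, hI, hle⟩ := Ideal.exists_le_maximal _ hne
  have hp := hI.isPrime
  have hm : ∀ i, T a b c d i ∈ I := fun i => hle (Ideal.subset_span ⟨i, rfl⟩)
  have e0 : a * c ∈ I := hm 0
  have e1 : a * d + b * c ∈ I := hm 1
  have e2 : b * d ∈ I := hm 2
  have aux : ∀ a b : R, IsCoprime a b → a ∈ I → b ∈ I → False := by
    rintro a b ⟨u, v, huv⟩ ha hb
    exact hp.ne_top ((Ideal.eq_top_iff_one _).mpr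
      (huv ▸ I.add_mem (I.mul_mem_left _ ha) (I.mul_mem_left _ hb)))
  by_cases ha : a ∈ I
  · have hb : b ∉ I := fun h => aux a b h1 ha h
    have hd := (hp.mem_or_mem e2).resolve_left hb
    have := (I.add_mem_iff_right (I.mul_mem_right d ha)).mp e1
    exact aux c d h2 ((hp.mem_or_mem this).resolve_left hb) hd
  · have hc := (hp.mem_or_mem e0).resolve_left ha
    have := (I.add_mem_iff_left (I.mul_mem_left b hc)).mp e1
    exact aux c d h2 hc ((hp.mem_or_mem this).resolve_left ha)

/-- Two proportional unimodular triples differ by a unit. -/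
theorem assoc_of_prop {R : Type*} [CommRing R] [IsDomain R] {v t : Fin 3 → R}
    (hv : Ideal.span (Set.range v) = ⊤) (ht : Ideal.span (Set.range t) = ⊤)
    (h : ∀ i j, v i * t j = v j * t i) : ∃ w : Rˣ, ∀ i, v i = w * t i := by
  have aux : ∀ v t : Fin 3 → R, Ideal.span (Set.range v) = ⊤ →
      (∀ i j, v i * t j = v j * t i) → ∃ w : R, ∀ i, t i = w * v i := by
    intro v t hv h
    obtain ⟨r, hr⟩ := (Ideal.mem_span_range_iff_exists_fun (x := (1 : R))).mp
      (by rw [hv]; trivial)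
    refine ⟨∑ i, r i * t i, fun j => ?_⟩
    calc t j = (∑ i, r i * v i) * t j := by rw [hr, one_mul]
      _ = _ := by
        rw [Finset.sum_mul, Finset.sum_mul]
        refine Finset.sum_congr rfl fun i _ => ?_
        rw [mul_assoc, h i j]; ring
  obtain ⟨w, hw⟩ := aux t v ht (fun i j => by rw [mul_comm, ← h, mul_comm])
  obtain ⟨w', hw'⟩ := aux v t hv h
  have : ∃ i, t i ≠ 0 := by
    by_contra hcon
    push Not at hcon
    have : t = 0 := funext hcon
    subst this
    have : Set.range (0 : Fin 3 → R) = {0} := Set.range_const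
    rw [this] at ht
    simp at ht
  obtain ⟨i, hi⟩ := this
  have e : w' * w = 1 := by
    have := hw' i
    rw [hw i, ← mul_assoc] at this
    exact mul_right_cancel₀ hi (by rw [← this, one_mul])
  exact ⟨⟨w, w', by rw [mul_comm, e], e⟩, hw⟩

variable (W : WeierstrassCurve k)

/-- The addition-subtraction map evaluated at a triple. -/
noncomputable def F {R : Type*} [CommRing R] (W : WeierstrassCurve R) (x : Fin 3 → R) :
    Fin 3 → R := fun i => (W.addSubMap i).eval x

theorem F0 {R : Type*} [CommRing R] (W : WeierstrassCurve R) (x : Fin 3 → R) :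
    F W x 0 = x 0 ^ 2 - W.b₄ * x 0 * x 2 - W.b₆ * x 1 * x 2 - W.b₈ * x 2 ^ 2 := by
  simp [F, WeierstrassCurve.addSubMap]
theorem F1 {R : Type*} [CommRing R] (W : WeierstrassCurve R) (x : Fin 3 → R) :
    F W x 1 = 2 * x 1 * x 0 + W.b₂ * x 0 * x 2 + W.b₄ * x 1 * x 2 + W.b₆ * x 2 ^ 2 := by
  simp [F, WeierstrassCurve.addSubMap]
theorem F2 {R : Type*} [CommRing R] (W : WeierstrassCurve R) (x : Fin 3 → R) :
    F W x 2 = x 1 ^ 2 - 4 * x 0 * x 2 := by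
  simp [F, WeierstrassCurve.addSubMap]

theorem F_map {R S : Type*} [CommRing R] [CommRing S] (f : R →+* S) (W : WeierstrassCurve R)
    (x : Fin 3 → R) (i : Fin 3) : F (W.map f) (fun j => f (x j)) i = f (F W x i) := by
  fin_cases i
  · simp [F0]
  · simp [F1, map_ofNat]
  · simp [F2, map_ofNat]

theorem F_smul {R : Type*} [CommRing R] (W : WeierstrassCurve R) (c : R)
    (x : Fin 3 → R) (i : Fin 3) : F W (fun j => c * x j) i = c ^ 2 * F W x i := by
  fin_cases i
  · simp [F0]; ring
  · simp [F1]; ring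
  · simp [F2]; ring

theorem span_F {R : Type*} [CommRing R] (W : WeierstrassCurve R) [W.IsElliptic] {x : Fin 3 → R}
    (hx : Ideal.span (Set.range x) = ⊤) : Ideal.span (Set.range (F W x)) = ⊤ := by
  by_contra hne
  obtain ⟨I, hI, hle⟩ := Ideal.exists_le_maximal _ hne
  have hm : ∀ i, F W x i ∈ I := fun i => hle (Ideal.subset_span ⟨i, rfl⟩)
  apply hI.ne_top
  rw [eq_top_iff, ← hx, Ideal.span_le]
  rintro _ ⟨i, rfl⟩
  apply hI.isPrime.mem_of_pow_mem 4
  rw [← W.addSubMapCoeff_condition x i]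
  exact I.sum_mem fun j _ => I.mul_mem_left _ (hm j)

theorem M_F [W.IsElliptic] (x : Fin 3 → k[X]) : M (F (W.map C) x) = 2 * M x := by
  set m := M x with hm
  have hd := le_M x
  rw [← hm] at hd
  have deg : ∀ i j, (x i * x j).natDegree ≤ 2 * m := fun i j => by
    rw [two_mul]; exact natDegree_mul_le_of_le (hd i) (hd j)
  have e4 : (4 : k[X]) = C 4 := (map_ofNat C 4).symm
  have e2 : (2 : k[X]) = C 2 := (map_ofNat C 2).symm
  have f0 : F (W.map C) x 0 = x 0 * x 0 - C W.b₄ * (x 0 * x 2) - C W.b₆ * (x 1 * x 2)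
      - C W.b₈ * (x 2 * x 2) := by rw [F0]; simp; ring
  have f1 : F (W.map C) x 1 = C 2 * (x 1 * x 0) + C W.b₂ * (x 0 * x 2) + C W.b₄ * (x 1 * x 2)
      + C W.b₆ * (x 2 * x 2) := by rw [F1, ← e2]; simp; ring
  have f2 : F (W.map C) x 2 = x 1 * x 1 - C 4 * (x 0 * x 2) := by rw [F2, ← e4]; ring
  have degC : ∀ c i j, (C c * (x i * x j)).natDegree ≤ 2 * m := fun c i j =>
    (natDegree_C_mul_le _ _).trans (deg i j)
  apply le_antisymm
  · apply M_le
    intro i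
    fin_cases i
    · change (F (W.map C) x 0).natDegree ≤ _
      rw [f0]
      simpa using natDegree_sub_le_of_le (natDegree_sub_le_of_le (natDegree_sub_le_of_le (deg 0 0)
        (degC W.b₄ 0 2)) (degC W.b₆ 1 2)) (degC W.b₈ 2 2)
    · change (F (W.map C) x 1).natDegree ≤ _
      rw [f1]
      exact natDegree_add_le_of_degree_le (natDegree_add_le_of_degree_le
        (natDegree_add_le_of_degree_le (degC _ _ _) (degC _ _ _)) (degC _ _ _)) (degC _ _ _)
    · change (F (W.map C) x 2).natDegree ≤ _
      rw [f2]
      simpa using natDegree_sub_le_of_le (deg 1 1) (degC 4 0 2)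
  · by_contra hlt
    push Not at hlt
    have hc : ∀ i, (F (W.map C) x i).coeff (2 * m) = 0 := fun i =>
      coeff_eq_zero_of_natDegree_lt ((le_M _ i).trans_lt hlt)
    have cm : ∀ i j, (x i * x j).coeff (2 * m) = (x i).coeff m * (x j).coeff m := fun i j => by
      rw [two_mul]; exact coeff_mul_add_eq_of_natDegree_le (hd i) (hd j)
    have hF : F W (fun i => (x i).coeff m) = 0 := by
      funext i
      have := hc i
      fin_cases i
      · change (F (W.map C) x 0).coeff _ = 0 at this
        rw [f0] at this
        simp only [coeff_sub, coeff_C_mul, cm] at this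
        change F W _ 0 = 0
        rw [F0, ← this]; ring
      · change (F (W.map C) x 1).coeff _ = 0 at this
        rw [f1] at this
        simp only [coeff_add, coeff_C_mul, cm] at this
        change F W _ 1 = 0
        rw [F1, ← this]; ring
      · change (F (W.map C) x 2).coeff _ = 0 at this
        rw [f2] at this
        simp only [coeff_sub, coeff_C_mul, cm] at this
        change F W _ 2 = 0
        rw [F2, ← this]; ring
    have hz : (fun i => (x i).coeff m) = 0 := by
      by_contra hne
      exact W.addSubMap_ne_zero hne hF
    obtain ⟨i, -, hi⟩ := Finset.exists_mem_eq_sup Finset.univ Finset.univ_nonempty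
      (fun i => (x i).natDegree)
    have hi' : m = (x i).natDegree := hi
    have : (x i).coeff m = 0 := congrFun hz i
    rw [hi'] at this
    have : x i = 0 := leadingCoeff_eq_zero.mp this
    rw [this, natDegree_zero] at hi'
    omega

end poly
end HasseAux

set_option linter.unusedSimpArgs false

namespace HasseAux
open WeierstrassCurve WeierstrassCurve.Affine

theorem alg0 {K : Type*} [Field K] {x₁ x₂ y₁ y₂ a₁ a₂ a₃ a₄ a₆ : K}
  (E1 : y₁ ^ 2 + a₁ * x₁ * y₁ + a₃ * y₁ = x₁ ^ 3 + a₂ * x₁ ^ 2 + a₄ * x₁ + a₆)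
  (E2 : y₂ ^ 2 + a₁ * x₂ * y₂ + a₃ * y₂ = x₂ ^ 3 + a₂ * x₂ ^ 2 + a₄ * x₂ + a₆) :
  ((x₁*x₂)^2 - (2*a₄+a₁*a₃)*(x₁*x₂) - (a₃^2+4*a₆)*(x₁+x₂)
      - (a₁ ^ 2 * a₆ + 4 * a₂ * a₆ - a₁ * a₃ * a₄ + a₂ * a₃ ^ 2 - a₄ ^ 2)) * (x₁-x₂)^2 =
    ((y₁-y₂)^2+a₁*(y₁-y₂)*(x₁-x₂) - (a₂+x₁+x₂)*(x₁-x₂)^2) *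
    ((y₁+y₂+a₁*x₂+a₃)^2+a₁*(y₁+y₂+a₁*x₂+a₃)*(x₁-x₂) - (a₂+x₁+x₂)*(x₁-x₂)^2) := by
  grind
theorem alg1 {K : Type*} [Field K] {x₁ x₂ y₁ y₂ a₁ a₂ a₃ a₄ a₆ : K}
  (E1 : y₁ ^ 2 + a₁ * x₁ * y₁ + a₃ * y₁ = x₁ ^ 3 + a₂ * x₁ ^ 2 + a₄ * x₁ + a₆)
  (E2 : y₂ ^ 2 + a₁ * x₂ * y₂ + a₃ * y₂ = x₂ ^ 3 + a₂ * x₂ ^ 2 + a₄ * x₂ + a₆) :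
  2*(x₁+x₂)*(x₁*x₂) + (a₁^2+4*a₂)*(x₁*x₂) + (2*a₄+a₁*a₃)*(x₁+x₂) + (a₃^2+4*a₆) =
    ((y₁-y₂)^2+a₁*(y₁-y₂)*(x₁-x₂) - (a₂+x₁+x₂)*(x₁-x₂)^2) +
    ((y₁+y₂+a₁*x₂+a₃)^2+a₁*(y₁+y₂+a₁*x₂+a₃)*(x₁-x₂) - (a₂+x₁+x₂)*(x₁-x₂)^2) := by
  grind
theorem alg2 {K : Type*} [Field K] {x y a₁ a₂ a₃ a₄ a₆ : K}
  (E1 : y ^ 2 + a₁ * x * y + a₃ * y = x ^ 3 + a₂ * x ^ 2 + a₄ * x + a₆) :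
  ((x*x)^2 - (2*a₄+a₁*a₃)*(x*x) - (a₃^2+4*a₆)*(x+x)
      - (a₁ ^ 2 * a₆ + 4 * a₂ * a₆ - a₁ * a₃ * a₄ + a₂ * a₃ ^ 2 - a₄ ^ 2)) =
  (3 * x ^ 2 + 2 * a₂ * x + a₄ - a₁ * y)^2 + a₁ * (3 * x ^ 2 + 2 * a₂ * x + a₄ - a₁ * y) * (2*y+a₁*x+a₃) - (a₂+x+x)*(2*y+a₁*x+a₃)^2 := by
  grind

theorem sym2x_eq {R : Type*} [CommRing R] {W : Affine R} (P Q : W.Point) :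
    P.sym2x Q = T (P.xRep 0) (P.xRep 1) (Q.xRep 0) (Q.xRep 1) := rfl

open scoped Classical in
theorem addSub_some {K : Type*} [Field K] {W : Affine K} {x₁ y₁ x₂ y₂ : K}
    (h₁ : W.Nonsingular x₁ y₁) (h₂ : W.Nonsingular x₂ y₂) (hx : x₁ ≠ x₂) (i : Fin 3) :
    F W ((Point.some x₁ y₁ h₁).sym2x (.some x₂ y₂ h₂)) i = (x₁ - x₂) ^ 2 *
      (Point.some x₁ y₁ h₁ + .some x₂ y₂ h₂).sym2x (.some x₁ y₁ h₁ - .some x₂ y₂ h₂) i := by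
  have E1 := (equation_iff ..).mp h₁.1
  have E2 := (equation_iff ..).mp h₂.1
  have hd : x₁ - x₂ ≠ 0 := sub_ne_zero.mpr hx
  rw [sub_eq_add_neg (Point.some x₁ y₁ h₁), Point.neg_some, Point.add_of_X_ne hx,
    Point.add_of_X_ne hx, Point.sym2x_some_some, Point.sym2x_some_some, slope_of_X_ne hx,
    slope_of_X_ne hx]
  have X3 : W.addX x₁ x₂ ((y₁ - y₂) / (x₁ - x₂)) = ((y₁-y₂)^2+W.a₁*(y₁-y₂)*(x₁-x₂)
      - (W.a₂+x₁+x₂)*(x₁-x₂)^2) / (x₁ - x₂) ^ 2 := by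
    rw [addX]; field_simp; ring
  have X4 : W.addX x₁ x₂ ((y₁ - W.negY x₂ y₂) / (x₁ - x₂)) = ((y₁+y₂+W.a₁*x₂+W.a₃)^2
      +W.a₁*(y₁+y₂+W.a₁*x₂+W.a₃)*(x₁-x₂) - (W.a₂+x₁+x₂)*(x₁-x₂)^2) / (x₁ - x₂) ^ 2 := by
    rw [addX, negY]; field_simp; ring
  rw [X3, X4]
  fin_cases i
  · change F W _ 0 = _
    rw [F0]
    simp only [Matrix.cons_val_zero, Matrix.cons_val_one, Matrix.cons_val, b₄, b₆, b₈,
      Fin.zero_eta, Fin.mk_one, Fin.reduceFinMk]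
    rw [div_mul_div_comm, ← alg0 E1 E2]
    field_simp
  · change F W _ 1 = _
    rw [F1]
    simp only [Matrix.cons_val_zero, Matrix.cons_val_one, Matrix.cons_val, b₂, b₄, b₆,
      Fin.zero_eta, Fin.mk_one, Fin.reduceFinMk]
    rw [← add_div, ← alg1 E1 E2]
    field_simp
  · change F W _ 2 = _
    rw [F2]
    simp
    ring

open scoped Classical in
theorem addSub_self {K : Type*} [Field K] {W : Affine K} [W.IsElliptic] (P : W.Point) :
    ∃ c : K, c ≠ 0 ∧ ∀ i, F W (P.sym2x P) i = c * (P + P).sym2x (P - P) i := by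
  rw [sub_self]
  rcases P with _ | ⟨x, y, h⟩
  · refine ⟨1, one_ne_zero, fun i => ?_⟩
    rw [← Point.zero_def, add_zero, Point.sym2x_zero_zero]
    fin_cases i
    · change F W _ 0 = _
      rw [F0]; simp
    · change F W _ 1 = _
      rw [F1]; simp
    · change F W _ 2 = _
      rw [F2]; simp
  have E := (equation_iff ..).mp h.1
  by_cases hy : y = W.negY x y
  · rw [Point.add_self_of_Y_eq hy]
    have hne := W.addSubMap_ne_zero (Point.sym2x_ne_zero (Point.some x y h) (Point.some x y h))
    have e1 : F W ((Point.some x y h).sym2x (Point.some x y h)) 1 = 0 := by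
      rw [F1]
      simp [b₂, b₄, b₆]
      have : 2 * y + W.a₁ * x + W.a₃ = 0 := by rw [negY] at hy; linear_combination hy
      linear_combination (-4) * E + (2 * y + W.a₁ * x + W.a₃) * this
    have e2 : F W ((Point.some x y h).sym2x (Point.some x y h)) 2 = 0 := by
      rw [F2]; simp; ring
    refine ⟨F W ((Point.some x y h).sym2x (Point.some x y h)) 0, fun h0 => hne ?_, fun i => ?_⟩
    · funext i
      fin_cases i
      exacts [h0, e1, e2]
    · fin_cases i
      · simp
      · simpa using e1
      · simpa using e2
  · rw [Point.add_self_of_Y_ne hy, Point.sym2x_some_some, Point.sym2x_some_zero,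
      slope_of_Y_ne rfl hy]
    have hne : y - W.negY x y ≠ 0 := sub_ne_zero.mpr hy
    refine ⟨(y - W.negY x y) ^ 2, pow_ne_zero 2 hne, fun i => ?_⟩
    fin_cases i
    · change F W _ 0 = _
      rw [F0]
      have X3 : W.addX x x ((3 * x ^ 2 + 2 * W.a₂ * x + W.a₄ - W.a₁ * y) / (y - W.negY x y)) =
          ((3 * x ^ 2 + 2 * W.a₂ * x + W.a₄ - W.a₁ * y)^2 + W.a₁ *
          (3 * x ^ 2 + 2 * W.a₂ * x + W.a₄ - W.a₁ * y) * (2*y+W.a₁*x+W.a₃)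
          - (W.a₂+x+x)*(2*y+W.a₁*x+W.a₃)^2) / (y - W.negY x y) ^ 2 := by
        have : 2*y+W.a₁*x+W.a₃ = y - W.negY x y := by rw [negY]; ring
        rw [addX, this]; field_simp; ring
      rw [X3, ← alg2 E]
      simp only [Matrix.cons_val_zero, Matrix.cons_val_one, Matrix.cons_val, b₄, b₆, b₈,
        Fin.zero_eta, Fin.mk_one, Fin.reduceFinMk]
      rw [mul_div_cancel₀ _ (pow_ne_zero 2 hne)]
      ring
    · change F W _ 1 = _
      rw [F1]
      simp [b₂, b₄, b₆, negY]
      linear_combination (-4) * E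
    · change F W _ 2 = _
      rw [F2]; simp; ring

open scoped Classical in
theorem addSub {K : Type*} [Field K] {W : Affine K} [W.IsElliptic] (P Q : W.Point) :
    ∃ c : K, c ≠ 0 ∧ ∀ i, F W (P.sym2x Q) i = c * (P + Q).sym2x (P - Q) i := by
  by_cases hPQ : P = Q
  · subst hPQ; exact addSub_self P
  by_cases hPQ' : P = -Q
  · obtain ⟨c, hc, h⟩ := addSub_self P
    refine ⟨c, hc, fun i => ?_⟩
    have : Q = -P := by rw [hPQ', neg_neg]
    rw [this, Point.sym2x_neg_right, h i, sub_neg_eq_add, ← sub_eq_add_neg, Point.sym2x_comm]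
  have base : ∀ Q : W.Point, ∀ i, F W ((0 : W.Point).sym2x Q) i = Q.sym2x Q i := by
    intro Q i
    rcases Q with _ | ⟨x, y, h⟩
    · fin_cases i
      · change F W _ 0 = _
        rw [F0]; simp [← Point.zero_def]
      · change F W _ 1 = _
        rw [F1]; simp [← Point.zero_def]
      · change F W _ 2 = _
        rw [F2]; simp [← Point.zero_def]
    · fin_cases i
      · change F W _ 0 = _
        rw [F0]; simp; ring
      · change F W _ 1 = _
        rw [F1]; simp; ring
      · change F W _ 2 = _
        rw [F2]; simp
  rcases P with _ | ⟨x₁, y₁, h₁⟩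
  · refine ⟨1, one_ne_zero, fun i => ?_⟩
    rw [← Point.zero_def, zero_add, zero_sub, Point.sym2x_neg_right, base, one_mul]
  rcases Q with _ | ⟨x₂, y₂, h₂⟩
  · refine ⟨1, one_ne_zero, fun i => ?_⟩
    rw [← Point.zero_def, add_zero, sub_zero, Point.sym2x_comm _ 0, base, one_mul]
  have hx : x₁ ≠ x₂ := by
    intro hx
    rcases (Point.X_eq_iff (h₁ := h₁) (h₂ := h₂)).mp hx with h | h
    exacts [hPQ h, hPQ' h]
  exact ⟨(x₁ - x₂) ^ 2, pow_ne_zero 2 (sub_ne_zero.mpr hx), addSub_some h₁ h₂ hx⟩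

end HasseAux

namespace HasseAux
open WeierstrassCurve WeierstrassCurve.Affine

section rep
variable {k : Type*} [Field k] {W : WeierstrassCurve k}
  {K : Type*} [Field K] [Algebra k K] [Algebra k[X] K] [IsScalarTower k k[X] K]

/-- `(a : b)` is a coprime representative of the `x`-coordinate of `P`. -/
def Rep (P : (W⁄K).Point) (a b : k[X]) : Prop :=
  IsCoprime a b ∧ algebraMap k[X] K a * P.xRep 1 = algebraMap k[X] K b * P.xRep 0

theorem T_smul {R : Type*} [CommRing R] (a b c d u v : R) (i : Fin 3) :
    T (u * a) (u * b) (v * c) (v * d) i = u * v * T a b c d i := by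
  fin_cases i <;> simp [T] <;> ring

theorem T_map {R S : Type*} [CommRing R] [CommRing S] (f : R →+* S) (a b c d : R) (i : Fin 3) :
    T (f a) (f b) (f c) (f d) i = f (T a b c d i) := by
  fin_cases i <;> simp [T]

variable [FaithfulSMul k[X] K]

theorem Rep.scale {P : (W⁄K).Point} {a b : k[X]} (h : Rep P a b) :
    ∃ c : K, c ≠ 0 ∧ algebraMap k[X] K a = c * P.xRep 0 ∧ algebraMap k[X] K b = c * P.xRep 1 := by
  obtain ⟨hab, he⟩ := h
  have inj := FaithfulSMul.algebraMap_injective k[X] K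
  rcases P with _ | ⟨x, y, hP⟩
  · rw [← Point.zero_def] at *
    simp only [Point.xRep_zero] at *
    simp at he
    have hb : b = 0 := by simpa using he.symm
    refine ⟨algebraMap k[X] K a, ?_, by simp, by simp [hb]⟩
    rintro h0
    have : a = 0 := by simpa using h0
    subst this hb
    exact not_isCoprime_zero_zero hab
  · simp only [Point.xRep_some] at *
    simp at he
    refine ⟨algebraMap k[X] K b, ?_, by simpa using he, by simp⟩
    rintro h0
    have hb : b = 0 := by simpa using h0
    have ha : a = 0 := by simpa [hb] using he
    subst ha hb
    exact not_isCoprime_zero_zero hab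

open scoped Classical in
theorem par_unit [W.IsElliptic] {P Q : (W⁄K).Point} {a b c d e f g h : k[X]} (h1 : Rep P a b)
    (h2 : Rep Q c d) (h3 : Rep (P + Q) e f) (h4 : Rep (P - Q) g h) :
    ∃ w : k[X]ˣ, ∀ i, F (W.map C) (T a b c d) i = w * T e f g h i := by
  apply assoc_of_prop (span_F _ (span_T h1.1 h2.1)) (span_T h3.1 h4.1)
  obtain ⟨c1, n1, s1, t1⟩ := h1.scale
  obtain ⟨c2, n2, s2, t2⟩ := h2.scale
  obtain ⟨c3, n3, s3, t3⟩ := h3.scale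
  obtain ⟨c4, n4, s4, t4⟩ := h4.scale
  have : WeierstrassCurve.IsElliptic (W⁄K) :=
    inferInstanceAs (W.map (algebraMap k K)).IsElliptic
  obtain ⟨u, hu, hF⟩ := addSub (W := W⁄K) P Q
  have inj := FaithfulSMul.algebraMap_injective k[X] K
  have hW : (W.map C).map (algebraMap k[X] K) = W⁄K := by
    rw [WeierstrassCurve.map_map]
    congr 1
    exact (IsScalarTower.algebraMap_eq k k[X] K).symm
  have E1 : ∀ i, algebraMap k[X] K (F (W.map C) (T a b c d) i) =
      (c1 * c2) ^ 2 * (u * (P + Q).sym2x (P - Q) i) := by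
    intro i
    rw [← F_map, ← hF, ← F_smul, hW]
    congr 1
    funext j
    rw [← T_map, s1, t1, s2, t2, T_smul, sym2x_eq]
  have E2 : ∀ i, algebraMap k[X] K (T e f g h i) = (c3 * c4) * (P + Q).sym2x (P - Q) i := by
    intro i
    rw [← T_map, s3, t3, s4, t4, T_smul, sym2x_eq]
  intro i j
  apply inj
  rw [map_mul, map_mul, E1, E1, E2, E2]
  ring

/-- The degree attached to a pair of polynomials. -/
noncomputable def ht (ab : k[X] × k[X]) : ℕ := max ab.1.natDegree ab.2.natDegree

open scoped Classical in
theorem par_ht [W.IsElliptic] {P Q : (W⁄K).Point} {a b c d e f g h : k[X]} (h1 : Rep P a b)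
    (h2 : Rep Q c d) (h3 : Rep (P + Q) e f) (h4 : Rep (P - Q) g h) :
    ht (e, f) + ht (g, h) = 2 * ht (a, b) + 2 * ht (c, d) := by
  obtain ⟨w, hw⟩ := par_unit h1 h2 h3 h4
  have m1 := M_T h1.1 h2.1
  have m2 := M_T h3.1 h4.1
  have m3 := M_F W (T a b c d)
  have m4 : M (F (W.map C) (T a b c d)) = M (T e f g h) := by
    unfold M
    congr 1
    funext i
    rw [hw]
    obtain ⟨r, hr, hr'⟩ := Polynomial.isUnit_iff.mp w.isUnit
    rw [← hr', natDegree_C_mul hr.ne_zero]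
  simp only [ht]
  omega

open scoped Classical in
theorem rep_zero : Rep (0 : (W⁄K).Point) 1 0 := ⟨isCoprime_one_left, by simp⟩

theorem rep_unique [W.IsElliptic] {P : (W⁄K).Point} {a b c d : k[X]} (h1 : Rep P a b)
    (h2 : Rep P c d) : ht (a, b) = ht (c, d) := by
  classical
  have := par_ht h1 rep_zero (e := c) (f := d) (g := c) (h := d) (by simpa using h2)
    (by simpa using h2)
  simp [ht] at this ⊢
  omega

theorem exists_rep {P : (W⁄K).Point}
    (h : ∀ x y hxy, P = .some x y hxy → ∃ a b : k[X], b ≠ 0 ∧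
      algebraMap k[X] K a = algebraMap k[X] K b * x) : ∃ ab : k[X] × k[X], Rep P ab.1 ab.2 := by
  classical
  rcases P with _ | ⟨x, y, hP⟩
  · exact ⟨(1, 0), rep_zero⟩
  · obtain ⟨a, b, hb, he⟩ := h x y hP rfl
    obtain ⟨d, a', b', hab, rfl, rfl⟩ : ∃ d a' b', IsCoprime a' b' ∧ a = d * a' ∧ b = d * b' := by
      have hd : EuclideanDomain.gcd a b ≠ 0 := fun h0 => hb (EuclideanDomain.gcd_eq_zero_iff.mp h0).2
      obtain ⟨a', ha'⟩ := EuclideanDomain.gcd_dvd_left a b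
      obtain ⟨b', hb'⟩ := EuclideanDomain.gcd_dvd_right a b
      refine ⟨EuclideanDomain.gcd a b, a', b', ?_, ha', hb'⟩
      refine ⟨EuclideanDomain.gcdA a b, EuclideanDomain.gcdB a b, mul_left_cancel₀ hd ?_⟩
      have := EuclideanDomain.gcd_eq_gcd_ab a b
      linear_combination (-EuclideanDomain.gcdA a b) * ha' - EuclideanDomain.gcdB a b * hb' - this
    refine ⟨(a', b'), hab, ?_⟩
    have inj := FaithfulSMul.algebraMap_injective k[X] K
    have hd : algebraMap k[X] K d ≠ 0 := by
      intro h0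
      apply hb
      have : d = 0 := by simpa using h0
      rw [this, zero_mul]
    apply mul_left_cancel₀ hd
    simpa [mul_assoc] using he

end rep
end HasseAux

namespace HasseAux
open WeierstrassCurve WeierstrassCurve.Affine

section sigma
variable {k : Type*} [Field k] (W : WeierstrassCurve k)



/-- The class of `Y`. -/
noncomputable def yR : W.toAffine.CoordinateRing := CoordinateRing.mk W.toAffine X

/-- The class of `X`. -/
noncomputable def xR : W.toAffine.CoordinateRing := algebraMap k[X] W.toAffine.CoordinateRing X

theorem rel : (yR W) ^ 2 + algebraMap k W.toAffine.CoordinateRing W.a₁ * xR W * yR W + algebraMap k W.toAffine.CoordinateRing W.a₃ * yR W =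
    xR W ^ 3 + algebraMap k W.toAffine.CoordinateRing W.a₂ * xR W ^ 2 + algebraMap k W.toAffine.CoordinateRing W.a₄ * xR W
      + algebraMap k W.toAffine.CoordinateRing W.a₆ := by
  rw [← sub_eq_zero]
  have : CoordinateRing.mk W.toAffine (X ^ 2 + C (C W.a₁ * X + C W.a₃) * X -
    C (X ^ 3 + C W.a₂ * X ^ 2 + C W.a₄ * X + C W.a₆)) = 0 := AdjoinRoot.mk_self
  refine Eq.trans ?_ this
  simp only [map_sub, map_add, map_mul, map_pow, IsScalarTower.algebraMap_apply k k[X] W.toAffine.CoordinateRing]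
  simp only [yR, xR]
  change _ = (CoordinateRing.mk W.toAffine) X ^ 2 +
    (algebraMap k[X] W.toAffine.CoordinateRing (C W.a₁) * algebraMap k[X] W.toAffine.CoordinateRing X + algebraMap k[X] W.toAffine.CoordinateRing (C W.a₃)) *
    (CoordinateRing.mk W.toAffine) X - (algebraMap k[X] W.toAffine.CoordinateRing X ^ 3 +
      algebraMap k[X] W.toAffine.CoordinateRing (C W.a₂) * algebraMap k[X] W.toAffine.CoordinateRing X ^ 2 +
      algebraMap k[X] W.toAffine.CoordinateRing (C W.a₄) * algebraMap k[X] W.toAffine.CoordinateRing X + algebraMap k[X] W.toAffine.CoordinateRing (C W.a₆))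
  simp only [Polynomial.algebraMap_eq]
  ring

/-- Homomorphisms out of the coordinate ring. -/
theorem exists_lift {L : Type*} [CommRing L] [Algebra k L] (x y : L)
    (h : y ^ 2 + algebraMap k L W.a₁ * x * y + algebraMap k L W.a₃ * y =
    x ^ 3 + algebraMap k L W.a₂ * x ^ 2 + algebraMap k L W.a₄ * x + algebraMap k L W.a₆) :
    ∃ f : W.toAffine.CoordinateRing →ₐ[k] L, f (xR W) = x ∧ f (yR W) = y ∧
      ∀ a : k[X], f (algebraMap k[X] W.toAffine.CoordinateRing a) = aeval x a := by
  have h0 : W.toAffine.polynomial.eval₂ (aeval x : k[X] →ₐ[k] L).toRingHom y = 0 := by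
    rw [polynomial]
    simp [eval₂_add, eval₂_sub, eval₂_mul, eval₂_pow, eval₂_C, eval₂_X]
    linear_combination h
  let f0 : W.toAffine.CoordinateRing →+* L := AdjoinRoot.lift (aeval x : k[X] →ₐ[k] L).toRingHom y h0
  have hf : ∀ a : k[X], f0 (algebraMap k[X] W.toAffine.CoordinateRing a) = aeval x a := fun a => AdjoinRoot.lift_of _
  refine ⟨{ f0 with commutes' := fun r => ?_ }, ?_, ?_, ?_⟩
  · change f0 (algebraMap k W.toAffine.CoordinateRing r) = _
    rw [IsScalarTower.algebraMap_apply k k[X] W.toAffine.CoordinateRing, hf]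
    simp
  · change f0 (xR W) = _
    rw [xR, hf, aeval_X]
  · exact AdjoinRoot.lift_root h0
  · exact hf

theorem exists_pq (r : W.toAffine.CoordinateRing) : ∃ p q : k[X], r = algebraMap k[X] W.toAffine.CoordinateRing p + algebraMap k[X] W.toAffine.CoordinateRing q * yR W := by
  obtain ⟨p, q, h⟩ := CoordinateRing.exists_smul_basis_eq r
  refine ⟨p, q, ?_⟩
  rw [← h, Algebra.smul_def, Algebra.smul_def, mul_one]
  rfl

theorem pq_zero {p q : k[X]} (h : algebraMap k[X] W.toAffine.CoordinateRing p + algebraMap k[X] W.toAffine.CoordinateRing q * yR W = 0) :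
    p = 0 ∧ q = 0 := by
  apply CoordinateRing.smul_basis_eq_zero (W' := W.toAffine)
  rw [← h, Algebra.smul_def, Algebra.smul_def, mul_one]
  rfl

theorem aeval_xR (a : k[X]) : aeval (xR W) a = algebraMap k[X] W.toAffine.CoordinateRing a := by
  have := aeval_algebraMap_apply W.toAffine.CoordinateRing (X : k[X]) a
  rw [xR, this, aeval_X_left_apply]

/-- The conjugate of `Y`. -/
noncomputable def yc : W.toAffine.CoordinateRing := -yR W - algebraMap k W.toAffine.CoordinateRing W.a₁ * xR W - algebraMap k W.toAffine.CoordinateRing W.a₃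

theorem exists_sigmaR : ∃ s : W.toAffine.CoordinateRing →ₐ[k] W.toAffine.CoordinateRing, s (xR W) = xR W ∧ s (yR W) = yc W ∧
    (∀ a : k[X], s (algebraMap k[X] W.toAffine.CoordinateRing a) = algebraMap k[X] W.toAffine.CoordinateRing a) ∧ (∀ r, s (s r) = r) ∧
    ∀ r, ∃ n : k[X], r * s r = algebraMap k[X] W.toAffine.CoordinateRing n := by
  obtain ⟨s, h1, h2, h3⟩ := exists_lift W (xR W) (yc W) (by
    have := rel W
    rw [yc]
    linear_combination this)
  have h3' : ∀ a : k[X], s (algebraMap k[X] W.toAffine.CoordinateRing a) = algebraMap k[X] W.toAffine.CoordinateRing a := fun a => by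
    rw [h3, aeval_xR]
  have hyc : s (yc W) = yR W := by
    rw [yc]
    simp only [map_sub, map_neg, map_mul, h1, h2, AlgHom.commutes]
    rw [yc]; ring
  refine ⟨s, h1, h2, h3', fun r => ?_, fun r => ?_⟩
  · obtain ⟨p, q, rfl⟩ := exists_pq W r
    simp only [map_add, map_mul, h3', h2, hyc]
  · obtain ⟨p, q, rfl⟩ := exists_pq W r
    refine ⟨p ^ 2 - p * q * (C W.a₁ * X + C W.a₃) -
      q ^ 2 * (X ^ 3 + C W.a₂ * X ^ 2 + C W.a₄ * X + C W.a₆), ?_⟩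
    have := rel W
    simp only [map_add, map_sub, map_pow, map_mul, h3', h2, yc]
    simp only [IsScalarTower.algebraMap_apply k k[X] W.toAffine.CoordinateRing, Polynomial.algebraMap_eq, xR] at this ⊢
    linear_combination (-algebraMap k[X] W.toAffine.CoordinateRing q ^ 2) * this

theorem exists_sigma [W.IsElliptic] : ∃ s : W.toAffine.FunctionField →ₐ[k] W.toAffine.FunctionField,
    s (algebraMap W.toAffine.CoordinateRing W.toAffine.FunctionField (xR W)) = algebraMap W.toAffine.CoordinateRing W.toAffine.FunctionField (xR W) ∧
    s (algebraMap W.toAffine.CoordinateRing W.toAffine.FunctionField (yR W)) = algebraMap W.toAffine.CoordinateRing W.toAffine.FunctionField (yc W) ∧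
    ∀ z, s z = z → ∃ a b : k[X], b ≠ 0 ∧ algebraMap k[X] W.toAffine.FunctionField a = algebraMap k[X] W.toAffine.FunctionField b * z := by
  obtain ⟨s, h1, h2, h3, h4, h5⟩ := exists_sigmaR W
  have hinj : Function.Injective s := Function.LeftInverse.injective h4
  have injK : Function.Injective (algebraMap W.toAffine.CoordinateRing W.toAffine.FunctionField) := FaithfulSMul.algebraMap_injective W.toAffine.CoordinateRing W.toAffine.FunctionField
  let g : W.toAffine.CoordinateRing →ₐ[k] W.toAffine.FunctionField := (IsScalarTower.toAlgHom k W.toAffine.CoordinateRing W.toAffine.FunctionField).comp s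
  have hg : Function.Injective g := injK.comp hinj
  have hl : ∀ r, (IsFractionRing.liftAlgHom hg : W.toAffine.FunctionField →ₐ[k] W.toAffine.FunctionField) (algebraMap W.toAffine.CoordinateRing W.toAffine.FunctionField r) =
    algebraMap W.toAffine.CoordinateRing W.toAffine.FunctionField (s r) := fun r => by
      rw [IsFractionRing.liftAlgHom_apply]; exact IsFractionRing.lift_algebraMap hg r
  refine ⟨IsFractionRing.liftAlgHom hg, by rw [hl, h1], by rw [hl, h2], fun z hz => ?_⟩
  obtain ⟨r, t, ht, rfl⟩ := IsFractionRing.div_surjective (A := W.toAffine.CoordinateRing) z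
  have ht0 : t ≠ 0 := nonZeroDivisors.ne_zero ht
  have ht1 : algebraMap W.toAffine.CoordinateRing W.toAffine.FunctionField t ≠ 0 := fun h => ht0 (injK (by rw [h, map_zero]))
  have hst0 : s t ≠ 0 := fun h => ht0 (hinj (by rw [h, map_zero]))
  have hst1 : algebraMap W.toAffine.CoordinateRing W.toAffine.FunctionField (s t) ≠ 0 := fun h => hst0 (injK (by rw [h, map_zero]))
  rw [map_div₀, hl, hl, div_eq_div_iff hst1 ht1, ← map_mul, ← map_mul] at hz
  have hz' := injK hz
  obtain ⟨n, hn⟩ := h5 t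
  obtain ⟨p, q, hpq⟩ := exists_pq W (r * s t)
  have hfix : s (r * s t) = r * s t := by rw [map_mul, h4, hz']
  have hq : q = 0 := by
    rw [hpq] at hfix
    simp only [map_add, map_mul, h3, h2, yc] at hfix
    have : algebraMap k[X] W.toAffine.CoordinateRing (-q * (C W.a₁ * X + C W.a₃)) +
        algebraMap k[X] W.toAffine.CoordinateRing (-2 * q) * yR W = 0 := by
      simp only [IsScalarTower.algebraMap_apply k k[X] W.toAffine.CoordinateRing, Polynomial.algebraMap_eq, xR] at hfix
      simp only [map_add, map_mul, map_neg, map_ofNat]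
      linear_combination hfix
    obtain ⟨e1, e2⟩ := pq_zero W this
    by_contra hq
    have f1 : (C W.a₁ * X + C W.a₃ : k[X]) = 0 := by simpa [hq] using e1
    have f2 : (2 : k[X]) = 0 := by simpa [hq] using e2
    have g1 : W.a₁ = 0 := by simpa using congrArg (fun f => coeff f 1) f1
    have g3 : W.a₃ = 0 := by simpa using congrArg (fun f => coeff f 0) f1
    have g2 : (2 : k) = 0 := by
      have := congrArg (fun f => coeff f 0) f2
      simpa using this
    apply W.isUnit_Δ.ne_zero
    have g4 : (4 : k) = 0 := by linear_combination 2 * g2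
    simp [WeierstrassCurve.Δ, b₂, b₄, b₆, b₈, g1, g2, g3, g4]
  refine ⟨p, n, ?_, ?_⟩
  · rintro rfl
    rw [map_zero] at hn
    exact (mul_ne_zero ht0 hst0) hn
  · rw [IsScalarTower.algebraMap_apply k[X] W.toAffine.CoordinateRing W.toAffine.FunctionField, IsScalarTower.algebraMap_apply k[X] W.toAffine.CoordinateRing W.toAffine.FunctionField,
      ← hn, map_mul]
    rw [hq, map_zero, zero_mul, add_zero] at hpq
    rw [← hpq, map_mul]
    field_simp

end sigma
end HasseAux

namespace HasseAux
open WeierstrassCurve WeierstrassCurve.Affine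

section count
variable {p : ℕ} [Fact p.Prime] (W : WeierstrassCurve (ZMod p))

/-- The Weierstrass equation as a predicate. -/
def Eqn {L : Type*} [CommRing L] [Algebra (ZMod p) L] (x y : L) : Prop :=
  y ^ 2 + algebraMap (ZMod p) L W.a₁ * x * y + algebraMap (ZMod p) L W.a₃ * y =
    x ^ 3 + algebraMap (ZMod p) L W.a₂ * x ^ 2 + algebraMap (ZMod p) L W.a₄ * x
      + algebraMap (ZMod p) L W.a₆

/-- The conjugate. -/
def cj {L : Type*} [CommRing L] [Algebra (ZMod p) L] (x y : L) : L :=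
  -y - algebraMap (ZMod p) L W.a₁ * x - algebraMap (ZMod p) L W.a₃

theorem Eqn.cj {L : Type*} [CommRing L] [Algebra (ZMod p) L] {x y : L} (h : Eqn W x y) :
    Eqn W x (cj W x y) := by
  unfold Eqn HasseAux.cj at *
  linear_combination h

theorem Eqn.eq_or {L : Type*} [Field L] [Algebra (ZMod p) L] {x y z : L} (h : Eqn W x y)
    (h' : Eqn W x z) : z = y ∨ z = HasseAux.cj W x y := by
  unfold Eqn HasseAux.cj at *
  have : (z - y) * (z - (-y - algebraMap (ZMod p) L W.a₁ * x - algebraMap (ZMod p) L W.a₃)) = 0 := by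
    linear_combination h' - h
  rcases mul_eq_zero.1 this with h | h
  · left; linear_combination h
  · right; linear_combination h

open scoped Classical in
theorem fiber_card {x y : ZMod p} (h : Eqn W x y) :
    (Finset.univ.filter (fun z => Eqn W x z)).card = if y = cj W x y then 1 else 2 := by
  have : Finset.univ.filter (fun z => Eqn W x z) = {y, cj W x y} := by
    ext z
    simp only [Finset.mem_filter, Finset.mem_univ, true_and, Finset.mem_insert,
      Finset.mem_singleton]
    constructor
    · intro h'; exact h.eq_or W h'
    · rintro (rfl | rfl)
      · exact h
      · exact h.cj W
  rw [this]
  split_ifs with hy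
  · rw [← hy]; simp
  · exact Finset.card_pair hy

theorem exists_closure (x : ZMod p) : ∃ y : AlgebraicClosure (ZMod p),
    Eqn W (algebraMap _ _ x) y := by
  let L := AlgebraicClosure (ZMod p)
  let x' : L := algebraMap _ _ x
  let q : L[X] := C 1 * X ^ 2 + C (algebraMap (ZMod p) L W.a₁ * x' + algebraMap (ZMod p) L W.a₃) * X +
    C (-( x' ^ 3 + algebraMap (ZMod p) L W.a₂ * x' ^ 2 + algebraMap (ZMod p) L W.a₄ * x'
      + algebraMap (ZMod p) L W.a₆))
  obtain ⟨y, hy⟩ := IsAlgClosed.exists_root q (by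
    rw [degree_quadratic one_ne_zero]; decide)
  refine ⟨y, ?_⟩
  have : eval y q = 0 := hy
  simp only [q, eval_add, eval_mul, eval_C, eval_pow, eval_X] at this
  unfold Eqn
  linear_combination this

theorem frob_fixed {L : Type*} [Field L] [Algebra (ZMod p) L] {y : L} (h : y ^ p = y) :
    ∃ c : ZMod p, algebraMap _ _ c = y := by
  have h1 : (∏ a : ZMod p, (X - C a)) = (X ^ p - X : (ZMod p)[X]) := by
    have hp : p.Prime := Fact.out
    have h3 := FiniteField.roots_X_pow_card_sub_X (ZMod p)
    have h2 := FiniteField.X_pow_card_sub_X_natDegree_eq (ZMod p) hp.one_lt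
    rw [ZMod.card] at h3
    have h4 : (X ^ p - X : (ZMod p)[X]).Monic := monic_X_pow_sub (by
      rw [degree_X]; exact_mod_cast hp.one_lt)
    have := prod_multiset_X_sub_C_of_monic_of_roots_card_eq h4 (by
      rw [h3, h2]; simp [ZMod.card])
    rw [h3] at this
    exact this
  have := congrArg (aeval y) h1.symm
  simp only [map_sub, map_pow, aeval_X, map_prod, aeval_C, h, sub_self] at this
  obtain ⟨c, _, hc⟩ := Finset.prod_eq_zero_iff.1 this.symm
  exact ⟨c, (sub_eq_zero.1 hc).symm⟩

theorem mult_D (x : ZMod p) : rootMultiplicity x ((X ^ p - X : (ZMod p)[X]) ^ 2) = 2 := by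
  classical
  have h := FiniteField.roots_X_pow_card_sub_X (ZMod p)
  rw [ZMod.card] at h
  rw [← count_roots, roots_pow, h]
  simp

open scoped Classical in
theorem count {e f g h : (ZMod p)[X]} {w : (ZMod p)[X]ˣ} (c1 : IsCoprime e f)
    (c2 : IsCoprime g h) (hD : (X ^ p - X) ^ 2 = (w : (ZMod p)[X]) * (f * h))
    (h0 : natDegree (e * g) = 2 * p + 2) (h1 : natDegree (e * h + f * g) ≤ 2 * p + 1)
    (hfg : ∀ (x : ZMod p) (y : AlgebraicClosure (ZMod p)), Eqn W (algebraMap _ _ x) y →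
      algebraMap _ _ (eval x (w * (f * g))) = (y ^ p - cj W (algebraMap _ _ x) y) ^ 2)
    (heh : ∀ (x : ZMod p) (y : AlgebraicClosure (ZMod p)), Eqn W (algebraMap _ _ x) y →
      algebraMap _ _ (eval x (w * (e * h))) = (y ^ p - y) ^ 2) :
    ht (g, h) = ∑ x : ZMod p, (Finset.univ.filter (fun z => Eqn W x z)).card + 1 := by
  have hp : p.Prime := Fact.out
  have hD0 : (X ^ p - X : (ZMod p)[X]) ^ 2 ≠ 0 :=
    pow_ne_zero _ (FiniteField.X_pow_card_sub_X_ne_zero _ hp.one_lt)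
  have hfh0 : f * h ≠ 0 := fun h' => hD0 (by rw [hD, h', mul_zero])
  have hf0 : f ≠ 0 := left_ne_zero_of_mul hfh0
  have hh0 : h ≠ 0 := right_ne_zero_of_mul hfh0
  have hw : ∀ x, eval x (w : (ZMod p)[X]) ≠ 0 := fun x =>
    ((w.isUnit).map (evalRingHom x)).ne_zero
  have wdeg : ∀ q : (ZMod p)[X], natDegree ((w : (ZMod p)[X]) * q) = natDegree q := fun q => by
    by_cases hq : q = 0
    · simp [hq]
    · rw [natDegree_mul w.ne_zero hq, natDegree_eq_zero_of_isUnit w.isUnit, zero_add]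
  have msum : ∀ x, rootMultiplicity x f + rootMultiplicity x h = 2 := fun x => by
    have := mult_D x
    rw [hD, rootMultiplicity_mul (by rwa [← hD]), rootMultiplicity_mul hfh0,
      rootMultiplicity_eq_zero (p := (w : (ZMod p)[X])) (hw x), zero_add] at this
    exact this
  have key : ∀ x, rootMultiplicity x h = (Finset.univ.filter (fun z => Eqn W x z)).card := by
    intro x
    obtain ⟨y, hy⟩ := exists_closure W x
    have a1 := hfg x y hy
    have a2 := heh x y hy
    by_cases hc : y ^ p = y
    · obtain ⟨c, rfl⟩ := frob_fixed hc
      have hEc : Eqn W x c := by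
        apply (algebraMap (ZMod p) (AlgebraicClosure (ZMod p))).injective
        unfold Eqn at hy
        simpa using hy
      rw [fiber_card W hEc]
      have hcj : cj W (algebraMap (ZMod p) (AlgebraicClosure (ZMod p)) x)
        (algebraMap (ZMod p) (AlgebraicClosure (ZMod p)) c) = algebraMap _ _ (cj W x c) := by
        simp [cj]
      rw [hc, hcj, ← map_sub, ← map_pow] at a1
      rw [hc, sub_self, zero_pow two_ne_zero, ← map_zero (algebraMap (ZMod p) _)] at a2
      replace a1 := (algebraMap (ZMod p) (AlgebraicClosure (ZMod p))).injective a1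
      replace a2 := (algebraMap (ZMod p) (AlgebraicClosure (ZMod p))).injective a2
      simp only [eval_mul] at a1 a2
      have a2' : eval x e * eval x h = 0 := (mul_eq_zero.1 a2).resolve_left (hw x)
      split_ifs with hcc
      · rw [← hcc, sub_self, zero_pow two_ne_zero] at a1
        have a1' : eval x f * eval x g = 0 := (mul_eq_zero.1 a1).resolve_left (hw x)
        have a3 : eval x f * eval x h = 0 := by
          have := congrArg (eval x) hD
          simp only [eval_mul, eval_pow, eval_sub, eval_X, ZMod.pow_card, sub_self,
            zero_pow two_ne_zero] at this
          exact (mul_eq_zero.1 this.symm).resolve_left (hw x)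
        obtain ⟨u, v, huv⟩ := c1
        obtain ⟨u', v', huv'⟩ := c2
        have b1 := congrArg (eval x) huv
        have b2 := congrArg (eval x) huv'
        simp only [eval_add, eval_mul, eval_one] at b1 b2
        have hfx : eval x f = 0 := by
          linear_combination (-eval x f) * b2 + eval x u' * a1' + eval x v' * a3
        have hhx : eval x h = 0 := by
          linear_combination (-eval x h) * b1 + eval x u * a2' + eval x v * a3
        have := (rootMultiplicity_pos hf0).2 hfx
        have := (rootMultiplicity_pos hh0).2 hhx
        have := msum x
        omega
      · have hfx : ¬ IsRoot f x := by
          intro hfx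
          rw [IsRoot.def] at hfx
          rw [hfx] at a1
          simp only [zero_mul, mul_zero] at a1
          exact hcc (sub_eq_zero.1 (pow_eq_zero_iff two_ne_zero |>.1 a1.symm))
        have := msum x
        rw [rootMultiplicity_eq_zero hfx] at this
        omega
    · have hhx : ¬ IsRoot h x := by
        intro hfx
        rw [IsRoot.def] at hfx
        simp only [eval_mul, hfx, mul_zero, map_zero] at a2
        exact hc (sub_eq_zero.1 (pow_eq_zero_iff two_ne_zero |>.1 a2.symm))
      rw [rootMultiplicity_eq_zero hhx]
      symm
      rw [Finset.card_eq_zero, Finset.filter_eq_empty_iff]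
      intro z _ hz
      have hz' : Eqn W (algebraMap (ZMod p) (AlgebraicClosure (ZMod p)) x)
          (algebraMap (ZMod p) (AlgebraicClosure (ZMod p)) z) := by
        have := congrArg (algebraMap (ZMod p) (AlgebraicClosure (ZMod p))) hz
        unfold Eqn
        simpa using this
      apply hc
      rcases hz'.eq_or W hy with rfl | rfl
      · rw [← map_pow, ZMod.pow_card]
      · simp only [cj, ← map_neg, ← map_mul, ← map_sub, ← map_pow, ZMod.pow_card]
  have degD : natDegree f + natDegree h = 2 * p := by
    have := congrArg natDegree hD
    rw [wdeg, natDegree_mul hf0 hh0, natDegree_pow,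
      FiniteField.X_pow_card_sub_X_natDegree_eq _ hp.one_lt] at this
    exact this.symm
  have le1 : ∀ q : (ZMod p)[X], ∑ x, rootMultiplicity x q ≤ natDegree q := fun q => by
    simp only [← count_roots]
    rw [Multiset.sum_count_eq_card (by simp)]
    exact card_roots' q
  have l1 := le1 f
  have l2 := le1 h
  have l3 : ∑ x, rootMultiplicity x f + ∑ x, rootMultiplicity x h = 2 * p := by
    rw [← Finset.sum_add_distrib]
    simp [msum, ZMod.card, mul_comm]
  have dh : natDegree h = ∑ x : ZMod p, (Finset.univ.filter (fun z => Eqn W x z)).card := by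
    rw [← Finset.sum_congr rfl (fun x _ => key x)]
    omega
  have heg0 : e * g ≠ 0 := fun h' => by rw [h'] at h0; simp at h0
  have he0 := left_ne_zero_of_mul heg0
  have hg0 := right_ne_zero_of_mul heg0
  rw [natDegree_mul he0 hg0] at h0
  have : natDegree g = natDegree h + 1 := by
    by_contra hne
    rcases lt_or_gt_of_ne hne with hlt | hlt
    · have : natDegree (f * g) < natDegree (e * h) := by
        rw [natDegree_mul he0 hh0, natDegree_mul hf0 hg0]; omega
      rw [natDegree_add_eq_left_of_natDegree_lt this, natDegree_mul he0 hh0] at h1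
      omega
    · have : natDegree (e * h) < natDegree (f * g) := by
        rw [natDegree_mul he0 hh0, natDegree_mul hf0 hg0]; omega
      rw [natDegree_add_eq_right_of_natDegree_lt this, natDegree_mul hf0 hg0] at h1
      omega
  simp only [ht]
  rw [this, ← dh]
  simp
end count
end HasseAux

namespace HasseAux
open WeierstrassCurve WeierstrassCurve.Affine

section geom
variable {p : ℕ} [Fact p.Prime] (W : WeierstrassCurve (ZMod p))

theorem point_of {K : Type*} [Field K] [Algebra (ZMod p) K] [W.IsElliptic] {x y : K}
    (h : Eqn W x y) : (W⁄K).Nonsingular x y := by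
  have : WeierstrassCurve.IsElliptic (W⁄K) :=
    inferInstanceAs (W.map (algebraMap (ZMod p) K)).IsElliptic
  exact equation_iff_nonsingular.mp ((equation_iff _ _).2 h)

theorem Eqn.map {L M : Type*} [CommRing L] [Algebra (ZMod p) L] [CommRing M] [Algebra (ZMod p) M]
    (f : L →ₐ[ZMod p] M) {x y : L} (h : Eqn W x y) : Eqn W (f x) (f y) := by
  have := congrArg f h
  simpa [Eqn] using this

theorem Eqn.frob {L : Type*} [CommRing L] [Algebra (ZMod p) L] {x y : L} (h : Eqn W x y) :
    Eqn W (x ^ p) (y ^ p) := by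
  have := h.map W (FiniteField.frobeniusAlgHom (ZMod p) L)
  simpa [ZMod.card] using this

open scoped Classical in
/-- The `x`-coordinate of a sum. -/
theorem rep_add {K : Type*} [Field K] [Algebra (ZMod p) K] [Algebra (ZMod p)[X] K]
    [IsScalarTower (ZMod p) (ZMod p)[X] K] [FaithfulSMul (ZMod p)[X] K] {x y x' y' : K}
    (h : (W⁄K).Nonsingular x y) (h' : (W⁄K).Nonsingular x' y') (hx : x' ≠ x)
    {e f : (ZMod p)[X]} (hr : Rep (Point.some x' y' h' + Point.some x y h) e f) :
    algebraMap (ZMod p)[X] K e * (x' - x) ^ 2 = algebraMap (ZMod p)[X] K f * ((y' - y) ^ 2 +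
      algebraMap (ZMod p) K W.a₁ * (y' - y) * (x' - x) -
      (algebraMap (ZMod p) K W.a₂ + x' + x) * (x' - x) ^ 2) := by
  have h1 := hr.2
  rw [Point.add_of_X_ne hx, Point.xRep_some, slope_of_X_ne hx] at h1
  have ha1 : (W⁄K).a₁ = algebraMap (ZMod p) K W.a₁ := rfl
  have ha2 : (W⁄K).a₂ = algebraMap (ZMod p) K W.a₂ := rfl
  simp only [Matrix.cons_val_one, Matrix.cons_val_zero, mul_one, addX, ha1, ha2] at h1
  have hx' : x' - x ≠ 0 := sub_ne_zero.2 hx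
  rw [h1]
  field_simp
  ring

theorem degs {e f g h : (ZMod p)[X]} {w : (ZMod p)[X]ˣ}
    (hw : ∀ i, F (W.map C) (T (X ^ p) 1 X 1) i = w * T e f g h i) :
    (X ^ p - X) ^ 2 = (w : (ZMod p)[X]) * (f * h) ∧ natDegree (e * g) = 2 * p + 2 ∧
      natDegree (e * h + f * g) ≤ 2 * p + 1 := by
  have hp : p.Prime := Fact.out
  have hp1 := hp.one_lt
  have wdeg : ∀ q : (ZMod p)[X], natDegree ((w : (ZMod p)[X]) * q) = natDegree q := fun q => by
    by_cases hq : q = 0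
    · simp [hq]
    · rw [natDegree_mul w.ne_zero hq, natDegree_eq_zero_of_isUnit w.isUnit, zero_add]
  have h0 := hw 0
  have h1 := hw 1
  have h2 := hw 2
  rw [F0] at h0
  rw [F1] at h1
  rw [F2] at h2
  simp only [T, Matrix.cons_val_zero, Matrix.cons_val_one, Matrix.cons_val, map_b₂, map_b₄, map_b₆,
    map_b₈] at h0 h1 h2
  refine ⟨?_, ?_, ?_⟩
  · rw [← h2]; ring
  · rw [← wdeg, ← h0]
    have : (X ^ p * X) ^ 2 - C W.b₄ * (X ^ p * X) * (1 * 1) - C W.b₆ * (X ^ p * 1 + 1 * X) * (1 * 1)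
        - C W.b₈ * (1 * 1) ^ 2 = X ^ (2 * p + 2) - (C W.b₄ * X ^ (p + 1) + C W.b₆ * X ^ p +
          C W.b₆ * X + C W.b₈) := by ring
    rw [this, natDegree_sub_eq_left_of_natDegree_lt, natDegree_X_pow]
    rw [natDegree_X_pow]
    refine lt_of_le_of_lt (b := p + 1) ?_ (by omega)
    compute_degree
  · rw [← wdeg, ← h1]
    have : 2 * (X ^ p * 1 + 1 * X) * (X ^ p * X) + C W.b₂ * (X ^ p * X) * (1 * 1) +
      C W.b₄ * (X ^ p * 1 + 1 * X) * (1 * 1) + C W.b₆ * (1 * 1) ^ 2 =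
      C 2 * X ^ (2 * p + 1) + C 2 * X ^ (p + 2) + C W.b₂ * X ^ (p + 1) + C W.b₄ * X ^ p +
        C W.b₄ * X + C W.b₆ := by
        simp only [map_ofNat]; ring
    rw [this]
    compute_degree
    omega

variable (KK : Type*) [Field KK] [Algebra (ZMod p) KK] [Algebra (ZMod p)[X] KK]
  [IsScalarTower (ZMod p) (ZMod p)[X] KK] [FaithfulSMul (ZMod p)[X] KK] [Algebra W.toAffine.CoordinateRing KK]
  [IsScalarTower (ZMod p) W.toAffine.CoordinateRing KK] [IsScalarTower (ZMod p)[X] W.toAffine.CoordinateRing KK] [FaithfulSMul W.toAffine.CoordinateRing KK]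

/-- Generic point. -/
theorem eqnR : Eqn W (xR W) (yR W) := rel W

theorem eqnK : Eqn W (algebraMap W.toAffine.CoordinateRing KK (xR W)) (algebraMap W.toAffine.CoordinateRing KK (yR W)) :=
  (eqnR W).map W (IsScalarTower.toAlgHom (ZMod p) W.toAffine.CoordinateRing KK)

theorem algebraMap_X : algebraMap (ZMod p)[X] KK X = algebraMap W.toAffine.CoordinateRing KK (xR W) := by
  rw [IsScalarTower.algebraMap_apply (ZMod p)[X] W.toAffine.CoordinateRing KK]; rfl

theorem x_ne : algebraMap W.toAffine.CoordinateRing KK (xR W) ^ p ≠ algebraMap W.toAffine.CoordinateRing KK (xR W) := by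
  have hp : p.Prime := Fact.out
  rw [← algebraMap_X W, ← map_pow]
  intro h
  have := FaithfulSMul.algebraMap_injective (ZMod p)[X] KK h
  exact FiniteField.X_pow_card_sub_X_ne_zero (ZMod p) hp.one_lt (sub_eq_zero.2 this)

/-- Pull back an identity to all points. -/
theorem specialize_id {q : (ZMod p)[X]} {z : W.toAffine.CoordinateRing}
    (h : algebraMap (ZMod p)[X] KK q = ((algebraMap W.toAffine.CoordinateRing KK (yR W)) ^ p - algebraMap W.toAffine.CoordinateRing KK z) ^ 2 +
      algebraMap (ZMod p) KK W.a₁ * ((algebraMap W.toAffine.CoordinateRing KK (yR W)) ^ p - algebraMap W.toAffine.CoordinateRing KK z) *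
        ((algebraMap W.toAffine.CoordinateRing KK (xR W)) ^ p - algebraMap W.toAffine.CoordinateRing KK (xR W)) -
      (algebraMap (ZMod p) KK W.a₂ + (algebraMap W.toAffine.CoordinateRing KK (xR W)) ^ p + algebraMap W.toAffine.CoordinateRing KK (xR W)) *
      ((algebraMap W.toAffine.CoordinateRing KK (xR W)) ^ p - algebraMap W.toAffine.CoordinateRing KK (xR W)) ^ 2)
    {L : Type*} [Field L] [Algebra (ZMod p) L] (s : W.toAffine.CoordinateRing →ₐ[ZMod p] L) (x : ZMod p)
    (hx : s (xR W) = algebraMap _ _ x) (hs : ∀ a : (ZMod p)[X], s (algebraMap _ _ a) =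
      aeval (algebraMap (ZMod p) L x) a) :
    algebraMap (ZMod p) L (eval x q) = (s (yR W) ^ p - s z) ^ 2 := by
  have h2 : algebraMap (ZMod p)[X] W.toAffine.CoordinateRing q = ((yR W) ^ p - z) ^ 2 +
      algebraMap (ZMod p) W.toAffine.CoordinateRing W.a₁ * ((yR W) ^ p - z) * ((xR W) ^ p - (xR W)) -
      (algebraMap (ZMod p) W.toAffine.CoordinateRing W.a₂ + (xR W) ^ p + (xR W)) * ((xR W) ^ p - (xR W)) ^ 2 := by
    apply FaithfulSMul.algebraMap_injective W.toAffine.CoordinateRing KK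
    rw [← IsScalarTower.algebraMap_apply, h]
    simp only [map_add, map_sub, map_mul, map_pow, ← IsScalarTower.algebraMap_apply]
  have h3 := congrArg s h2
  rw [hs, aeval_algebraMap_apply] at h3
  have e : (algebraMap (ZMod p) L x) ^ p = algebraMap (ZMod p) L x := by
    rw [← map_pow, ZMod.pow_card]
  simp only [map_add, map_sub, map_mul, map_pow, hx, e, sub_self] at h3
  rw [← coe_aeval_eq_eval, h3]
  ring

open scoped Classical in
theorem ht_sub [W.IsElliptic] {P Q : (W⁄KK).Point}
    (hQ : Q = .some _ _ (point_of W (eqnK W KK))) (hP : P = .some _ _ (point_of W ((eqnK W KK).frob W)))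
    {e f g h : (ZMod p)[X]} (h3 : Rep (P + Q) e f) (h4 : Rep (P - Q) g h) :
    Rep Q X 1 ∧ Rep P (X ^ p) 1 ∧
    ht (g, h) = ∑ x : ZMod p, (Finset.univ.filter (fun z => Eqn W x z)).card + 1 := by
  have r1 : Rep Q X 1 := ⟨isCoprime_one_right, by rw [hQ]; simp [algebraMap_X W KK]⟩
  have r2 : Rep P (X ^ p) 1 := ⟨isCoprime_one_right, by rw [hP]; simp [algebraMap_X W KK]⟩
  refine ⟨r1, r2, ?_⟩
  obtain ⟨w, hw⟩ := par_unit r2 r1 h3 h4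
  obtain ⟨d2, d0, d1⟩ := degs W hw
  have hD := congrArg (algebraMap (ZMod p)[X] KK) d2
  simp only [map_pow, map_sub, map_mul, algebraMap_X W KK] at hD
  have hx := sub_ne_zero.2 (x_ne W KK)
  have e1 := h3
  rw [hP, hQ] at e1
  replace e1 := rep_add W _ _ (x_ne W KK) e1
  have e2 := h4
  rw [hP, hQ, sub_eq_add_neg, Point.neg_some] at e2
  replace e2 := rep_add W _ _ (x_ne W KK) e2
  have hn : (W⁄KK).negY (algebraMap W.toAffine.CoordinateRing KK (xR W)) (algebraMap W.toAffine.CoordinateRing KK (yR W)) =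
      algebraMap W.toAffine.CoordinateRing KK (yc W) := by
    have ha1 : (W⁄KK).a₁ = algebraMap (ZMod p) KK W.a₁ := rfl
    have ha3 : (W⁄KK).a₃ = algebraMap (ZMod p) KK W.a₃ := rfl
    simp only [negY, ha1, ha3, yc, map_sub, map_neg, map_mul, ← IsScalarTower.algebraMap_apply]
  rw [hn] at e2
  refine count W h3.1 h4.1 d2 d0 d1 (fun x y hy => ?_) (fun x y hy => ?_)
  · obtain ⟨s, s1, s2, s3⟩ := exists_lift W _ _ hy
    have := specialize_id W KK (q := w * (f * g)) (z := yc W) (by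
      apply mul_right_cancel₀ (pow_ne_zero 2 hx)
      simp only [map_mul]
      linear_combination (algebraMap _ _ (w : (ZMod p)[X]) * algebraMap _ _ f) * e2 -
        (((algebraMap W.toAffine.CoordinateRing KK (yR W)) ^ p - algebraMap W.toAffine.CoordinateRing KK (yc W)) ^ 2 +
      algebraMap (ZMod p) KK W.a₁ * ((algebraMap W.toAffine.CoordinateRing KK (yR W)) ^ p - algebraMap W.toAffine.CoordinateRing KK (yc W)) *
        ((algebraMap W.toAffine.CoordinateRing KK (xR W)) ^ p - algebraMap W.toAffine.CoordinateRing KK (xR W)) -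
      (algebraMap (ZMod p) KK W.a₂ + (algebraMap W.toAffine.CoordinateRing KK (xR W)) ^ p + algebraMap W.toAffine.CoordinateRing KK (xR W)) *
      ((algebraMap W.toAffine.CoordinateRing KK (xR W)) ^ p - algebraMap W.toAffine.CoordinateRing KK (xR W)) ^ 2) * hD) s x s1 s3
    rw [this, s2]
    congr 2
    simp [yc, cj, s1, s2]
  · obtain ⟨s, s1, s2, s3⟩ := exists_lift W _ _ hy
    have := specialize_id W KK (q := w * (e * h)) (z := yR W) (by
      apply mul_right_cancel₀ (pow_ne_zero 2 hx)
      simp only [map_mul]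
      linear_combination (algebraMap _ _ (w : (ZMod p)[X]) * algebraMap _ _ h) * e1 -
        (((algebraMap W.toAffine.CoordinateRing KK (yR W)) ^ p - algebraMap W.toAffine.CoordinateRing KK (yR W)) ^ 2 +
      algebraMap (ZMod p) KK W.a₁ * ((algebraMap W.toAffine.CoordinateRing KK (yR W)) ^ p - algebraMap W.toAffine.CoordinateRing KK (yR W)) *
        ((algebraMap W.toAffine.CoordinateRing KK (xR W)) ^ p - algebraMap W.toAffine.CoordinateRing KK (xR W)) -
      (algebraMap (ZMod p) KK W.a₂ + (algebraMap W.toAffine.CoordinateRing KK (xR W)) ^ p + algebraMap W.toAffine.CoordinateRing KK (xR W)) *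
      ((algebraMap W.toAffine.CoordinateRing KK (xR W)) ^ p - algebraMap W.toAffine.CoordinateRing KK (xR W)) ^ 2) * hD) s x s1 s3
    rw [this, s2]

end geom
end HasseAux

namespace HasseAux
open WeierstrassCurve WeierstrassCurve.Affine

section main
variable {p : ℕ} [Fact p.Prime] (W : WeierstrassCurve (ZMod p))

open scoped Classical in
theorem card_points [W.IsElliptic] [Fintype W.toAffine.Point] :
    Fintype.card W.toAffine.Point =
      ∑ x : ZMod p, (Finset.univ.filter (fun z => Eqn W x z)).card + 1 := by
  have hE : ∀ x y : ZMod p, W.toAffine.Equation x y ↔ Eqn W x y := fun x y =>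
    (equation_iff (W := W.toAffine) x y)
  have e1 : Fintype.card W.toAffine.Point =
      Fintype.card (Option {xy : ZMod p × ZMod p // W.toAffine.Equation xy.1 xy.2}) :=
    Fintype.card_congr W.toAffine.pointEquiv
  rw [e1, Fintype.card_option, Fintype.card_subtype]
  congr 1
  simp only [hE, Finset.card_filter]
  rw [Fintype.sum_prod_type]

open scoped Classical in
theorem bound (KK : Type*) [Field KK] [Algebra (ZMod p) KK] [Algebra (ZMod p)[X] KK]
    [IsScalarTower (ZMod p) (ZMod p)[X] KK] [FaithfulSMul (ZMod p)[X] KK]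
    [Algebra W.toAffine.CoordinateRing KK]
    [IsScalarTower (ZMod p) W.toAffine.CoordinateRing KK]
    [IsScalarTower (ZMod p)[X] W.toAffine.CoordinateRing KK]
    [FaithfulSMul W.toAffine.CoordinateRing KK] [W.IsElliptic]
    (s : KK →ₐ[ZMod p] KK)
    (s1 : s (algebraMap _ KK (xR W)) = algebraMap _ KK (xR W))
    (s2 : s (algebraMap _ KK (yR W)) = algebraMap _ KK (yc W))
    (s3 : ∀ z, s z = z → ∃ a b : (ZMod p)[X], b ≠ 0 ∧
      algebraMap (ZMod p)[X] KK a = algebraMap (ZMod p)[X] KK b * z) :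
    ((p : ℤ) + 1 - (∑ x : ZMod p, (Finset.univ.filter (fun z => Eqn W x z)).card + 1 : ℕ)) ^ 2 ≤
      4 * p := by
  let S : AddSubgroup (W⁄KK).Point :=
    { carrier := {P | Point.map (W' := W) s P = -P}
      zero_mem' := by simp
      add_mem' := by
        intro a b ha hb
        simp only [Set.mem_ofPred_eq] at *
        rw [map_add, ha, hb, neg_add]
      neg_mem' := by
        intro a ha
        simp only [Set.mem_ofPred_eq] at *
        rw [map_neg, ha] }
  have hrep : ∀ P : S, ∃ ab : (ZMod p)[X] × (ZMod p)[X], Rep P.1 ab.1 ab.2 := by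
    rintro ⟨P, hP⟩
    apply exists_rep
    rintro x y hxy rfl
    apply s3
    have : Point.map (W' := W) s (.some x y hxy) = -.some x y hxy := hP
    rw [Point.map_some, Point.neg_some] at this
    exact (Point.some.inj this).1
  choose r hr using hrep
  have ha1 : (W⁄KK).a₁ = algebraMap (ZMod p) KK W.a₁ := rfl
  have ha3 : (W⁄KK).a₃ = algebraMap (ZMod p) KK W.a₃ := rfl
  have hn : (W⁄KK).negY (algebraMap _ KK (xR W)) (algebraMap _ KK (yR W)) =
      algebraMap _ KK (yc W) := by
    simp only [negY, ha1, ha3, yc, map_sub, map_neg, map_mul, ← IsScalarTower.algebraMap_apply]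
  have hnp : (W⁄KK).negY (algebraMap _ KK (xR W) ^ p) (algebraMap _ KK (yR W) ^ p) =
      algebraMap _ KK (yc W) ^ p := by
    rw [← hn]
    have hF := fun z : KK => FiniteField.frobeniusAlgHom_apply (ZMod p) KK z
    simp only [ZMod.card] at hF
    rw [← hF, ← hF, ← hF]
    simp only [negY, ha1, ha3, map_sub, map_neg, map_mul, AlgHom.commutes]
  let Q : S := ⟨.some _ _ (point_of W (eqnK W KK)), by
    change Point.map (W' := W) s _ = -_
    rw [Point.map_some, Point.neg_some]
    congr 1
    rw [s2, hn]⟩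
  let P : S := ⟨.some _ _ (point_of W ((eqnK W KK).frob W)), by
    change Point.map (W' := W) s _ = -_
    rw [Point.map_some, Point.neg_some]
    congr 1
    · rw [map_pow, s1]
    · rw [map_pow, s2, hnp]⟩
  obtain ⟨q1, q2, q3⟩ := ht_sub W KK (P := P.1) (Q := Q.1) rfl rfl (hr (P + Q)) (hr (P - Q))
  have hQ : ht (r Q) = 1 := by
    rw [rep_unique (hr Q) q1]; simp [ht]
  have hP : ht (r P) = p := by
    rw [rep_unique (hr P) q2]; simp [ht]
  have := disc (fun x : S => (ht (r x) : ℤ)) (fun x => Int.natCast_nonneg _) (fun x y => by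
    have := par_ht (hr x) (hr y) (hr (x + y)) (hr (x - y))
    exact_mod_cast this) Q P (by simp [hQ])
  simp only [hP] at this
  rw [show ht (r (P - Q)) = _ from q3] at this
  exact this

end main
end HasseAux

/-- **Hasse bound.** Let `E` be an elliptic curve over the finite field `𝔽_p`
(`p` prime) and `a_p = p + 1 − #E(𝔽_p)`, where `#E(𝔽_p)` counts all `𝔽_p`-rational points
including the point at infinity.  Then `|a_p| ≤ 2√p`. -/
theorem hasse_bound
    (p : ℕ) [Fact p.Prime] (E : WeierstrassCurve (ZMod p)) [E.IsElliptic]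
    [Fintype E.toAffine.Point] :
    |(p : ℝ) + 1 - Fintype.card E.toAffine.Point| ≤ 2 * Real.sqrt p := by
  classical
  obtain ⟨s, s1, s2, s3⟩ := HasseAux.exists_sigma E
  have h := HasseAux.bound E E.toAffine.FunctionField s s1 s2 s3
  have hc := HasseAux.card_points E
  have h' : ((p : ℝ) + 1 - Fintype.card E.toAffine.Point) ^ 2 ≤ 4 * p := by
    rw [hc]
    exact_mod_cast h
  have h2 := Real.abs_le_sqrt h'
  rw [show (4 : ℝ) * p = 2 ^ 2 * p by norm_num, Real.sqrt_mul (by norm_num),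
    Real.sqrt_sq (by norm_num)] at h2
  exact h2
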